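/- Let s ∈ ℂ with s ≠ −ω and s ≠ −ω², and let Δ, Δ' ∈ ℂ³ satisfy ψ₁(Δ) ≠ 0, ψ₂(Δ) ≠ 0, ψ₁(Δ') ≠ 0, ψ₂(Δ') ≠ 0. If Δ is reversely similar to Δ', i.e. ψ(Δ)³ · ψ(Δ')³ = 1, then C_s(Δ) is reversely similar to C_{1−s}(Δ'), i.e. ψ(C_s·Δ)³ · ψ(C_{1−s}·Δ')³ = 1 (with ψ₁ of both images nonzero). -/

import Mathlib

noncomputable def ω : ℂ := Complex.exp (2 * Real.pi * Complex.I / 3)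

def J : Matrix (Fin 3) (Fin 3) ℂ := !![0,1,0; 0,0,1; 1,0,0]

noncomputable def W : Matrix (Fin 3) (Fin 3) ℂ := !![1,1,1; 1,ω,ω^2; 1,ω^2,ω]

/-- generalized cevian operator `S[η,η'] = W ⬝ diag(1,η',η) ⬝ W⁻¹` -/
noncomputable def S (η η' : ℂ) : Matrix (Fin 3) (Fin 3) ℂ :=
  W * Matrix.diagonal ![1, η', η] * W⁻¹

/-- `ω^k` for `k : ZMod 3` (well defined since `ω^3 = 1`). -/
noncomputable def ωz (k : ZMod 3) : ℂ := ω ^ k.val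

/-- `J^k` for `k : ZMod 3` (well defined since `J^3 = 1`). -/
def Jz (k : ZMod 3) : Matrix (Fin 3) (Fin 3) ℂ := J ^ k.val

/-- generalized median operator `M^{wx/yz}[η,η']` -/
noncomputable def M (η η' : ℂ) (w x y z : ZMod 3) : Matrix (Fin 3) (Fin 3) ℂ :=
  S ((η * ωz (-x) - ωz (-w)) / (ωz (-z) - ωz (-y)))
    ((η' * ωz x - ωz w) / (ωz z - ωz y))

/-- binary Ceva operator `C_s` -/
noncomputable def C (s : ℂ) : Matrix (Fin 3) (Fin 3) ℂ :=
  W * !![1,0,0; 0,0,s+ω; 0,s+ω^2,0] * W⁻¹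

/-- Hajja's operator `H_s` -/
noncomputable def H (s : ℂ) : Matrix (Fin 3) (Fin 3) ℂ := S (s+ω) (s+ω^2)

noncomputable def ψ₀ (Δ : Fin 3 → ℂ) : ℂ := (Δ 0 + Δ 1 + Δ 2) / 3
noncomputable def ψ₁ (Δ : Fin 3 → ℂ) : ℂ := (Δ 0 + Δ 1 * ω^2 + Δ 2 * ω) / 3
noncomputable def ψ₂ (Δ : Fin 3 → ℂ) : ℂ := (Δ 0 + Δ 1 * ω + Δ 2 * ω^2) / 3
noncomputable def ψ (Δ : Fin 3 → ℂ) : ℂ := ψ₂ Δ / ψ₁ Δ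

/-!
The columns of `W` are the characters of `ℤ/3`, which are orthogonal, so `W⁻¹ = Wᴴ / 3` sends a
triangle to its Fourier coefficients `(ψ₀, ψ₁, ψ₂)`. In these coordinates `C s` swaps `ψ₁` and `ψ₂`
up to the factors `s + ω` and `s + ω ^ 2`, hence inverts the shape function up to the ratio of the
two factors. Since `1 + ω + ω ^ 2 = 0`, the reflection `s ↦ 1 - s` exchanges these factors up to a
common sign, so the ratios belonging to `s` and `1 - s` are inverse to each other.
-/

theorem isPrimitiveRoot_ω : IsPrimitiveRoot ω 3 :=
  Complex.isPrimitiveRoot_exp 3 three_ne_zero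

theorem star_ω : star ω = ω ^ 2 := by
  have norm_ω : ‖ω‖ = 1 := isPrimitiveRoot_ω.norm'_eq_one three_ne_zero
  rw [Complex.star_def, ← Complex.inv_eq_conj norm_ω]
  apply inv_eq_of_mul_eq_one_right
  rw [← pow_succ', isPrimitiveRoot_ω.pow_eq_one]

theorem one_add_ω_add_ω_sq : 1 + ω + ω ^ 2 = 0 := by
  simpa [Finset.sum_range_succ] using isPrimitiveRoot_ω.geom_sum_eq_zero (by norm_num)

theorem one_sub_add_ω (s : ℂ) : 1 - s + ω = -(s + ω ^ 2) := by
  linear_combination one_add_ω_add_ω_sq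

theorem one_sub_add_ω_sq (s : ℂ) : 1 - s + ω ^ 2 = -(s + ω) := by
  linear_combination one_add_ω_add_ω_sq

section FourierCoefficients

open Matrix

theorem W_conjTranspose : Wᴴ = !![1, 1, 1; 1, ω ^ 2, ω; 1, ω, ω ^ 2] := by
  have star_ω_sq : star (ω ^ 2) = ω := by rw [← star_ω, star_star]
  ext i j
  fin_cases i <;> fin_cases j <;> simp only [W, conjTranspose_apply] <;>
    first | exact star_one ℂ | exact star_ω | exact star_ω_sq

theorem W_mul_conjTranspose : W * Wᴴ = (3 : ℂ) • (1 : Matrix (Fin 3) (Fin 3) ℂ) := by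
  rw [W_conjTranspose, W, mul_fin_three, one_fin_three]
  ext i j
  fin_cases i <;> fin_cases j <;>
    simp only [Matrix.smul_apply, smul_eq_mul, of_apply, Fin.zero_eta, Fin.mk_one,
      Fin.reduceFinMk, cons_val] <;>
    grind [one_add_ω_add_ω_sq]

theorem W_mul_smul_conjTranspose : W * ((3 : ℂ)⁻¹ • Wᴴ) = 1 := by
  rw [mul_smul_comm, W_mul_conjTranspose, inv_smul_smul₀ three_ne_zero]

theorem isUnit_det_W : IsUnit W.det :=
  isUnit_det_of_right_inverse W_mul_smul_conjTranspose

theorem W_inv : W⁻¹ = (3 : ℂ)⁻¹ • Wᴴ :=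
  inv_eq_right_inv W_mul_smul_conjTranspose

theorem W_inv_mulVec (Δ : Fin 3 → ℂ) : W⁻¹ *ᵥ Δ = ![ψ₀ Δ, ψ₁ Δ, ψ₂ Δ] := by
  rw [W_inv, W_conjTranspose, smul_mulVec]
  ext i
  fin_cases i <;>
    simp only [mulVec, dotProduct, Fin.sum_univ_three, ψ₀, ψ₁, ψ₂, Pi.smul_apply,
      smul_eq_mul, of_apply, Fin.zero_eta, Fin.mk_one, Fin.reduceFinMk, cons_val] <;>
    ring

theorem W_inv_mul_C (s : ℂ) :
    W⁻¹ * C s = !![1, 0, 0; 0, 0, s + ω; 0, s + ω ^ 2, 0] * W⁻¹ := by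
  rw [C, Matrix.mul_assoc W, nonsing_inv_mul_cancel_left _ _ isUnit_det_W]

theorem fourierCoeff_C_mulVec (s : ℂ) (Δ : Fin 3 → ℂ) :
    ![ψ₀ (C s *ᵥ Δ), ψ₁ (C s *ᵥ Δ), ψ₂ (C s *ᵥ Δ)] =
      ![ψ₀ Δ, (s + ω) * ψ₂ Δ, (s + ω ^ 2) * ψ₁ Δ] := by
  rw [← W_inv_mulVec, mulVec_mulVec, W_inv_mul_C, ← mulVec_mulVec, W_inv_mulVec]
  ext i
  fin_cases i <;> simp [mulVec, dotProduct, Fin.sum_univ_three]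

theorem ψ₁_C_mulVec (s : ℂ) (Δ : Fin 3 → ℂ) : ψ₁ (C s *ᵥ Δ) = (s + ω) * ψ₂ Δ :=
  congrFun (fourierCoeff_C_mulVec s Δ) 1

theorem ψ₂_C_mulVec (s : ℂ) (Δ : Fin 3 → ℂ) : ψ₂ (C s *ᵥ Δ) = (s + ω ^ 2) * ψ₁ Δ :=
  congrFun (fourierCoeff_C_mulVec s Δ) 2

theorem ψ_C_mulVec (s : ℂ) (Δ : Fin 3 → ℂ) :
    ψ (C s *ᵥ Δ) = (s + ω ^ 2) / (s + ω) * (ψ Δ)⁻¹ := by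
  rw [ψ, ψ, ψ₁_C_mulVec, ψ₂_C_mulVec, inv_div, div_mul_div_comm]

theorem ψ_C_one_sub_mulVec (s : ℂ) (Δ : Fin 3 → ℂ) :
    ψ (C (1 - s) *ᵥ Δ) = (s + ω) / (s + ω ^ 2) * (ψ Δ)⁻¹ := by
  rw [ψ_C_mulVec, one_sub_add_ω, one_sub_add_ω_sq, neg_div_neg_eq]

theorem ψ_C_mulVec_mul_ψ_C_one_sub_mulVec {s : ℂ} (h : s + ω ≠ 0) (h' : s + ω ^ 2 ≠ 0)
    (Δ Δ' : Fin 3 → ℂ) : ψ (C s *ᵥ Δ) * ψ (C (1 - s) *ᵥ Δ') = (ψ Δ * ψ Δ')⁻¹ := by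
  rw [ψ_C_mulVec, ψ_C_one_sub_mulVec, mul_mul_mul_comm, div_mul_div_cancel₀ h, div_self h',
    one_mul, mul_inv]

end FourierCoefficients

theorem ceva_preserves_reverse_similarity (s : ℂ) (hs1 : s ≠ -ω) (hs2 : s ≠ -ω ^ 2)
    (Δ Δ' : Fin 3 → ℂ) (h1 : ψ₁ Δ ≠ 0) (h2 : ψ₂ Δ ≠ 0)
    (h1' : ψ₁ Δ' ≠ 0) (h2' : ψ₂ Δ' ≠ 0)
    (hrev : (ψ Δ) ^ 3 * (ψ Δ') ^ 3 = 1) :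
    ψ₁ ((C s).mulVec Δ) ≠ 0 ∧ ψ₁ ((C (1 - s)).mulVec Δ') ≠ 0 ∧
    (ψ ((C s).mulVec Δ)) ^ 3 * (ψ ((C (1 - s)).mulVec Δ')) ^ 3 = 1 := by
  have hω : s + ω ≠ 0 := mt eq_neg_of_add_eq_zero_left hs1
  have hω' : s + ω ^ 2 ≠ 0 := mt eq_neg_of_add_eq_zero_left hs2
  refine ⟨?_, ?_, ?_⟩
  · rw [ψ₁_C_mulVec]
    exact mul_ne_zero hω h2
  · rw [ψ₁_C_mulVec, one_sub_add_ω]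
    exact mul_ne_zero (neg_ne_zero.2 hω') h2'
  · rw [← mul_pow, ψ_C_mulVec_mul_ψ_C_one_sub_mulVec hω hω', inv_pow, mul_pow, hrev, inv_one]
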